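/- Let X be a decomposable continuum with the property of Kelley such that F_1(X) ⊆ NB(F_1(X)) and NB(F_1(X)) is compact. Then for every A ∈ NB(F_1(X)), the complement X \ A is connected by continua: any two points of X \ A lie in a common subcontinuum of X contained in X \ A. -/

import Mathlib

open Set Metric Filter Topology TopologicalSpace

/-- A subcontinuum: a nonempty compact connected subset. -/
def IsSubcontinuum {X : Type*} [TopologicalSpace X] (K : Set X) : Prop :=
  IsCompact K ∧ IsConnected K

/-- `kappa A B` : the union of all subcontinua meeting `B` and avoiding `A`. -/
def kappa {X : Type*} [TopologicalSpace X] (A B : Set X) : Set X :=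
  ⋃₀ {L | IsSubcontinuum L ∧ (L ∩ B).Nonempty ∧ L ⊆ Aᶜ}

/-- A continuum is decomposable if it is the union of two proper subcontinua. -/
def Decomposable (X : Type*) [TopologicalSpace X] : Prop :=
  ∃ M N : Set X, IsSubcontinuum M ∧ IsSubcontinuum N ∧
    M ≠ univ ∧ N ≠ univ ∧ M ∪ N = univ

/-- The property of Kelley. -/
def KelleyProp (X : Type*) [MetricSpace X] : Prop :=
  ∀ (x : ℕ → X) (x₀ : X), Tendsto x atTop (𝓝 x₀) →
    ∀ A : Set X, IsSubcontinuum A → x₀ ∈ A →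
      ∃ B : ℕ → Set X, (∀ n, IsSubcontinuum (B n) ∧ x n ∈ B n) ∧
        Tendsto (fun n => hausdorffDist (B n) A) atTop (𝓝 0)

/-- The hyperspace of nonblockers of `F₁(X)`, as a subset of the hyperspace of
nonempty compact subsets of `X` with the Hausdorff metric. -/
def NB (X : Type*) [MetricSpace X] : Set (NonemptyCompacts X) :=
  {A | ∀ x ∉ (A : Set X), Dense (kappa (A : Set X) ({x} : Set X))}

/-- The minimal nonblocker containing `x` (equal to `X` if `x` lies in no nonblocker). -/
def piSet (X : Type*) [MetricSpace X] (x : X) : Set X :=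
  ⋂ A ∈ {A ∈ NB X | x ∈ (A : Set X)}, (A : Set X)

section Kappa

variable {X : Type*} [TopologicalSpace X] {B C : Set X} {x y z : X}

/-- A set is nonblocking if from each point outside it one reaches a dense set by subcontinua
avoiding it. -/
def Nonblocking (B : Set X) : Prop :=
  ∀ x ∉ B, Dense (kappa B {x})

lemma mem_kappa_singleton :
    y ∈ kappa C {x} ↔ ∃ L, IsSubcontinuum L ∧ x ∈ L ∧ y ∈ L ∧ L ⊆ Cᶜ := by
  simp only [kappa, mem_sUnion, mem_ofPred_eq, inter_singleton_nonempty]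
  constructor
  · rintro ⟨L, ⟨h1, h2, h3⟩, h4⟩
    exact ⟨L, h1, h2, h4, h3⟩
  · rintro ⟨L, h1, h2, h4, h3⟩
    exact ⟨L, ⟨h1, h2, h3⟩, h4⟩

lemma mem_kappa_self (hx : x ∉ C) : x ∈ kappa C {x} :=
  mem_kappa_singleton.2 ⟨{x}, ⟨isCompact_singleton, isConnected_singleton⟩, rfl, rfl, by simpa⟩

lemma mem_kappa_symm (h : y ∈ kappa C {x}) : x ∈ kappa C {y} := by
  obtain ⟨L, h1, h2, h3, h4⟩ := mem_kappa_singleton.1 h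
  exact mem_kappa_singleton.2 ⟨L, h1, h3, h2, h4⟩

lemma IsSubcontinuum.union {K L : Set X} (hK : IsSubcontinuum K) (hL : IsSubcontinuum L)
    (h : (K ∩ L).Nonempty) : IsSubcontinuum (K ∪ L) :=
  ⟨hK.1.union hL.1, hK.2.union h hL.2⟩

lemma mem_kappa_trans (hxy : y ∈ kappa C {x}) (hyz : z ∈ kappa C {y}) : z ∈ kappa C {x} := by
  obtain ⟨L, h1, h2, h3, h4⟩ := mem_kappa_singleton.1 hxy
  obtain ⟨M, k1, k2, k3, k4⟩ := mem_kappa_singleton.1 hyz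
  exact mem_kappa_singleton.2 ⟨L ∪ M, h1.union k1 ⟨y, h3, k2⟩, Or.inl h2, Or.inr k3,
    union_subset h4 k4⟩

lemma kappa_subset_compl : kappa C B ⊆ Cᶜ := by
  rintro y ⟨L, ⟨-, -, h⟩, hy⟩
  exact h hy

lemma isConnected_closure_kappa (hx : x ∉ C) : IsConnected (closure (kappa C {x})) := by
  refine IsConnected.closure ⟨⟨x, mem_kappa_self hx⟩, ?_⟩
  refine isPreconnected_sUnion x _ ?_ ?_
  · rintro L ⟨-, h, -⟩
    simpa using h
  · rintro L ⟨h, -, -⟩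
    exact h.2.isPreconnected

end Kappa

lemma IsClosed.insert {X : Type*} [TopologicalSpace X] [T1Space X] {s : Set X} (hs : IsClosed s)
    (x : X) : IsClosed (insert x s) :=
  isClosed_singleton.union hs

/-- Boundary bumping. -/
lemma IsSubcontinuum.exists_not_subset_interior {X : Type*} [TopologicalSpace X] [T2Space X]
    {K F : Set X} (hK : IsSubcontinuum K) (hF : IsClosed F) {z : X} (hzK : z ∈ K) (hzF : z ∈ F)
    (hKF : ¬ K ⊆ F) :
    ∃ D, IsSubcontinuum D ∧ D ⊆ K ∩ F ∧ z ∈ D ∧ ¬ D ⊆ interior F := by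
  have hcpt : IsCompact (K ∩ F) := hK.1.inter_right hF
  have : CompactSpace (K ∩ F : Set X) := isCompact_iff_compactSpace.1 hcpt
  let w : (K ∩ F : Set X) := ⟨z, hzK, hzF⟩
  refine ⟨Subtype.val '' connectedComponent w,
    ⟨isClosed_connectedComponent.isCompact.image continuous_subtype_val,
      isConnected_connectedComponent.image _ continuous_subtype_val.continuousOn⟩,
    ?_, ⟨w, mem_connectedComponent, rfl⟩, fun hsub => ?_⟩
  · rintro _ ⟨y, -, rfl⟩
    exact y.2
  have hnhds : ∀ y ∈ ⋂ s : {s : Set (K ∩ F : Set X) // IsClopen s ∧ w ∈ s}, s.1,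
      Subtype.val ⁻¹' interior F ∈ 𝓝 y := by
    intro y hy
    rw [← connectedComponent_eq_iInter_isClopen] at hy
    exact (isOpen_interior.preimage continuous_subtype_val).mem_nhds (hsub ⟨y, hy, rfl⟩)
  have : Nonempty {s : Set (K ∩ F : Set X) // IsClopen s ∧ w ∈ s} :=
    ⟨⟨univ, isClopen_univ, mem_univ _⟩⟩
  obtain ⟨⟨s, hs, hws⟩, hsF⟩ := exists_subset_nhds_of_compactSpace
    (V := fun s : {s : Set (K ∩ F : Set X) // IsClopen s ∧ w ∈ s} => s.1)
    (fun s t => ⟨⟨s ∩ t, s.2.1.inter t.2.1, s.2.2, t.2.2⟩, inter_subset_left, inter_subset_right⟩)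
    (fun s => s.2.1.1) hnhds
  obtain ⟨O, hO, rfl⟩ := isOpen_induced_iff.1 hs.2
  set G : Set X := Subtype.val '' (Subtype.val ⁻¹' O : Set (K ∩ F : Set X)) with hG
  have hGclosed : IsClosed G := (hs.1.isCompact.image continuous_subtype_val).isClosed
  have hKG : K ∩ (O ∩ interior F) ⊆ G := fun y hy =>
    ⟨⟨y, hy.1, interior_subset hy.2.2⟩, hy.2.1, rfl⟩
  have hGO : G ⊆ O ∩ interior F := by
    rintro _ ⟨y, hy, rfl⟩
    exact ⟨hy, hsF hy⟩
  obtain ⟨k, hkK, hkF⟩ := not_subset.1 hKF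
  obtain ⟨y, hyK, hyO, hyG⟩ := hK.2.isPreconnected (O ∩ interior F) Gᶜ (hO.inter isOpen_interior)
    hGclosed.isOpen_compl
    (fun y _ => (em (y ∈ G)).imp (fun h => hGO h) id)
    ⟨z, hzK, hGO ⟨w, hws, rfl⟩⟩ ⟨k, hkK, fun h => hkF (interior_subset (hGO h).2)⟩
  exact hyG (hKG ⟨hyK, hyO⟩)

section Metric

variable {X : Type*} [MetricSpace X] {A B C : Set X} {x y z p b : X}

lemma KelleyProp.kappa_subset_closure (hkel : KelleyProp X) (hC : IsClosed C)
    (hy : y ∈ closure (kappa C {z})) :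
    kappa C {y} ⊆ closure (kappa C {z}) := by
  intro v hv
  obtain ⟨L, hL, hyL, hvL, hLC⟩ := mem_kappa_singleton.1 hv
  obtain ⟨u, hu, hulim⟩ := mem_closure_iff_seq_limit.1 hy
  obtain ⟨D, hD, hDlim⟩ := hkel u y hulim L hL hyL
  obtain ⟨δ, hδ, hδC⟩ := hL.1.exists_thickening_subset_open hC.isOpen_compl hLC
  refine Metric.mem_closure_iff.2 fun ε hε => ?_
  obtain ⟨n, hn⟩ := (hDlim.eventually (gt_mem_nhds (lt_min hδ hε))).exists
  have hfin := hausdorffEDist_ne_top_of_nonempty_of_bounded (hD n).1.2.nonempty hL.2.nonempty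
    (hD n).1.1.isBounded hL.1.isBounded
  obtain ⟨v', hv', hdist⟩ :=
    exists_dist_lt_of_hausdorffDist_lt' hvL (hn.trans_le (min_le_right _ _)) hfin
  refine ⟨v', mem_kappa_trans (hu n) (mem_kappa_singleton.2
    ⟨D n, (hD n).1, (hD n).2, hv', fun a ha => hδC ?_⟩), by rwa [dist_comm]⟩
  obtain ⟨l, hl, hal⟩ :=
    exists_dist_lt_of_hausdorffDist_lt ha (hn.trans_le (min_le_left _ _)) hfin
  exact mem_thickening_iff.2 ⟨l, hl, hal⟩

/-- If removing `p` from `B` gives a nonblocking set, every nondense `kappa B {z}` accumulates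
at `p`. -/
lemma mem_closure_kappa_of_not_dense (hp : Nonblocking (B \ {p})) (hz : z ∉ B)
    (hnd : ¬ Dense (kappa B {z})) : p ∈ closure (kappa B {z}) := by
  have hdense := hp z fun h => hz h.1
  obtain ⟨v, hv, hvB⟩ := not_subset.1 fun h => hnd (hdense.mono h)
  obtain ⟨L, hL, hzL, hvL, hLB⟩ := mem_kappa_singleton.1 hv
  have hpL : p ∈ L ∧ p ∈ B := by
    by_contra hcon
    refine hvB (mem_kappa_singleton.2 ⟨L, hL, hzL, hvL, fun a ha haB => hLB ha ⟨haB, ?_⟩⟩)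
    rintro rfl
    exact hcon ⟨ha, haB⟩
  have hzp : z ≠ p := by
    rintro rfl
    exact hz hpL.2
  refine Metric.mem_closure_iff.2 fun ε hε => ?_
  obtain ⟨r, hr, hrlt⟩ := exists_between (lt_min hε (dist_pos.2 hzp))
  have hF : IsClosed {a | r ≤ dist a p} :=
    isClosed_le continuous_const (continuous_id.dist continuous_const)
  obtain ⟨D, hD, hDsub, hzD, hDint⟩ := hL.exists_not_subset_interior hF hzL
    (hrlt.trans_le (min_le_right _ _)).le (fun h => by simpa [hr.not_ge] using h hpL.1)
  obtain ⟨c, hcD, hcF⟩ := not_subset.1 hDint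
  refine ⟨c, mem_kappa_singleton.2 ⟨D, hD, hzD, hcD, fun a ha haB => hLB (hDsub ha).1 ⟨haB, ?_⟩⟩, ?_⟩
  · rintro rfl
    simpa [hr.not_ge] using (hDsub ha).2
  · by_contra hcon
    have hopen : IsOpen {a | r < dist a p} :=
      isOpen_lt continuous_const (continuous_id.dist continuous_const)
    refine hcF (interior_maximal (fun a (ha : r < dist a p) => ha.le) hopen ?_)
    rw [dist_comm] at hcon
    exact (hrlt.trans_le (min_le_left _ _)).trans_le (not_lt.1 hcon)

/-- The closure of a nondense `kappa B {z}` stays, off `A`, in the classes of points of `B`. -/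
lemma KelleyProp.exists_mem_kappa_of_mem_closure (hkel : KelleyProp X) (hA : Nonblocking A)
    (hB : IsClosed B) (hnd : ¬ Dense (kappa B {z})) (hy : y ∈ closure (kappa B {z}))
    (hyA : y ∉ A) : ∃ q ∈ B, y ∈ kappa A {q} := by
  by_contra! hcon
  have hsub : kappa A {y} ⊆ kappa B {y} := by
    intro v hv
    obtain ⟨L, hL, hyL, hvL, hLA⟩ := mem_kappa_singleton.1 hv
    exact mem_kappa_singleton.2 ⟨L, hL, hyL, hvL, fun a ha haB =>
      hcon a haB (mem_kappa_singleton.2 ⟨L, hL, ha, hyL, hLA⟩)⟩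
  exact hnd (dense_closure.1 ((hA y hyA).mono (hsub.trans (hkel.kappa_subset_closure hB hy))))

lemma KelleyProp.closure_inter_closure_subset (hkel : KelleyProp X) {E : Set X}
    (hE : IsClosed E) {b₁ b₂ z₁ z₂ : X} (hNB : Nonblocking (insert b₁ E \ {b₁}))
    (h₁ : b₁ ∉ closure (kappa (insert b₂ E) {z₂})) (h₂ : b₂ ∉ closure (kappa (insert b₁ E) {z₁})) :
    closure (kappa (insert b₁ E) {z₁}) ∩ closure (kappa (insert b₂ E) {z₂}) ⊆ E := by
  rintro u ⟨hu₁, hu₂⟩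
  by_contra huE
  have hu : u ∉ insert b₁ E := by
    rintro (rfl | h)
    exacts [h₁ hu₂, huE h]
  have hsub₁ := hkel.kappa_subset_closure (hE.insert b₁) hu₁
  have hsub₂ := hkel.kappa_subset_closure (hE.insert b₂) hu₂
  have hb₁ : b₁ ∈ closure (kappa (insert b₁ E) {u}) :=
    mem_closure_kappa_of_not_dense hNB hu fun hd =>
      h₂ (closure_minimal hsub₁ isClosed_closure (hd b₂))
  refine h₁ (closure_minimal ?_ isClosed_closure hb₁)
  refine Subset.trans (fun v hv => ?_) hsub₂
  obtain ⟨L, hL, huL, hvL, hLB⟩ := mem_kappa_singleton.1 hv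
  refine mem_kappa_singleton.2 ⟨L, hL, huL, hvL, fun a ha haB => ?_⟩
  rcases haB with rfl | haE
  · exact h₂ (hsub₁ (mem_kappa_singleton.2 ⟨L, hL, huL, ha, hLB⟩))
  · exact hLB ha (Or.inr haE)

/-- A class of the complement of `insert b' (insert p' C)` whose closure avoids `p` and `b` joins
`p'` to points near `b'` without meeting `insert b (insert p C)`. -/
lemma KelleyProp.mem_closure_kappa_of_notMem [CompactSpace X] (hkel : KelleyProp X)
    (hC : IsClosed C) {p' b' z' : X}
    (hNB : ∀ q ∈ insert b' (insert p' C), Nonblocking (insert b' (insert p' C) \ {q}))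
    (hz' : z' ∉ insert b' (insert p' C)) (hnd : ¬ Dense (kappa (insert b' (insert p' C)) {z'}))
    (hb'p' : b' ≠ p') (hp'C : p' ∉ C)
    (hp : p ∉ closure (kappa (insert b' (insert p' C)) {z'}))
    (hb : b ∉ closure (kappa (insert b' (insert p' C)) {z'})) :
    b' ∈ closure (kappa (insert b (insert p C)) {p'}) := by
  set B' := insert b' (insert p' C) with hB'
  have hB'closed : IsClosed B' := (hC.insert p').insert b'
  set R := closure (kappa B' {z'}) with hR
  have hp'R : p' ∈ R :=
    mem_closure_kappa_of_not_dense (hNB p' (Or.inr (Or.inl rfl))) hz' hnd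
  have hb'R : b' ∈ R := mem_closure_kappa_of_not_dense (hNB b' (Or.inl rfl)) hz' hnd
  have hnhds : (insert b' C)ᶜ ∈ 𝓝 p' := by
    refine (hC.insert b').isOpen_compl.mem_nhds ?_
    rintro (h | h)
    exacts [hb'p' h.symm, hp'C h]
  obtain ⟨ε, hε, hεsub⟩ := Metric.nhds_basis_closedBall.mem_iff.1 hnhds
  obtain ⟨H, hH, hHsub, hp'H, hHint⟩ :=
    IsSubcontinuum.exists_not_subset_interior (K := R)
      ⟨isClosed_closure.isCompact, isConnected_closure_kappa hz'⟩
      (isClosed_closedBall (x := p') (ε := ε)) hp'R (mem_closedBall_self hε.le)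
      (fun h => hεsub (h hb'R) (Or.inl rfl))
  obtain ⟨h, hhH, hhint⟩ := not_subset.1 hHint
  have hhp' : h ≠ p' := by
    rintro rfl
    exact hhint (ball_subset_interior_closedBall (mem_ball_self hε))
  have hhB' : h ∉ B' := by
    rintro (rfl | rfl | hh)
    · exact hεsub (hHsub hhH).2 (Or.inl rfl)
    · exact hhp' rfl
    · exact hεsub (hHsub hhH).2 (Or.inr hh)
  have hsubR : kappa B' {h} ⊆ R := hkel.kappa_subset_closure hB'closed (hHsub hhH).1
  have hb'h : b' ∈ closure (kappa B' {h}) :=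
    mem_closure_kappa_of_not_dense (hNB b' (Or.inl rfl)) hhB' fun hd =>
      hp (closure_minimal hsubR isClosed_closure (hd p))
  refine closure_mono (fun v hv => ?_) hb'h
  obtain ⟨L, hL, hhL, hvL, hLB⟩ := mem_kappa_singleton.1 hv
  have hLR : L ⊆ R := fun a ha => hsubR (mem_kappa_singleton.2 ⟨L, hL, hhL, ha, hLB⟩)
  refine mem_kappa_singleton.2 ⟨H ∪ L, hH.union hL ⟨h, hhH, hhL⟩, Or.inl hp'H, Or.inr hvL, ?_⟩
  rintro a ha (rfl | rfl | haC)
  · exact hb (ha.elim (fun h => (hHsub h).1) fun h => hLR h)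
  · exact hp (ha.elim (fun h => (hHsub h).1) fun h => hLR h)
  · rcases ha with ha | ha
    · exact hεsub (hHsub ha).2 (Or.inr haC)
    · exact hLB ha (Or.inr (Or.inr haC))

lemma Nonblocking.kappa_isMeagre [CompactSpace X] (hA : Nonblocking A) (hAc : IsClosed A)
    (hAne : A.Nonempty) (hxA : x ∉ A) (hyA : y ∉ A) (hxy : y ∉ kappa A {x}) :
    IsMeagre (kappa A {z}) := by
  have hint : interior (kappa A {z}) = ∅ := by
    by_contra hne
    have hjoin : ∀ w ∉ A, w ∈ kappa A {z} := by
      intro w hw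
      obtain ⟨v, hv, hvw⟩ := (hA w hw).inter_open_nonempty _ isOpen_interior
        (nonempty_iff_ne_empty.2 hne)
      exact mem_kappa_trans (interior_subset hv) (mem_kappa_symm hvw)
    exact hxy (mem_kappa_trans (mem_kappa_symm (hjoin x hxA)) (hjoin y hyA))
  let T : ℕ → Set X := fun n =>
    {w | ∃ L, IsSubcontinuum L ∧ z ∈ L ∧ w ∈ L ∧ L ⊆ {a | 1 / ((n : ℝ) + 1) ≤ infDist a A}}
  have hpos : ∀ n : ℕ, (0 : ℝ) < 1 / ((n : ℝ) + 1) := fun n => by positivity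
  have hfar : ∀ n : ℕ, {a | 1 / ((n : ℝ) + 1) ≤ infDist a A} ⊆ Aᶜ := fun n a ha haA => by
    have h0 := infDist_zero_of_mem haA
    have h1 : 1 / ((n : ℝ) + 1) ≤ infDist a A := ha
    linarith [hpos n]
  have hTsub : ∀ n, T n ⊆ kappa A {z} := by
    rintro n w ⟨L, h1, h2, h3, h4⟩
    exact mem_kappa_singleton.2 ⟨L, h1, h2, h3, h4.trans (hfar n)⟩
  have hTcl : ∀ n, IsClosed (T n) := by
    intro n
    have hFcl : IsClosed {a | 1 / ((n : ℝ) + 1) ≤ infDist a A} :=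
      isClosed_le continuous_const (continuous_infDist_pt A)
    refine closure_subset_iff_isClosed.1 fun w hw => ?_
    have hTF : T n ⊆ {a | 1 / ((n : ℝ) + 1) ≤ infDist a A} := by
      rintro w ⟨L, -, -, h3, h4⟩
      exact h4 h3
    have hTpre : IsPreconnected (T n) := by
      have : T n = ⋃₀ {L | IsSubcontinuum L ∧ z ∈ L ∧
          L ⊆ {a | 1 / ((n : ℝ) + 1) ≤ infDist a A}} := by
        ext w
        constructor
        · rintro ⟨L, h1, h2, h3, h4⟩
          exact ⟨L, ⟨h1, h2, h4⟩, h3⟩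
        · rintro ⟨L, ⟨h1, h2, h4⟩, h3⟩
          exact ⟨L, h1, h2, h3, h4⟩
      rw [this]
      exact isPreconnected_sUnion z _ (fun L hL => hL.2.1) fun L hL => hL.1.2.isPreconnected
    obtain ⟨w₀, M, h1, h2, h3, h4⟩ := closure_nonempty_iff.1 ⟨w, hw⟩
    have hzT : z ∈ T n := ⟨M, h1, h2, h2, h4⟩
    exact ⟨closure (T n), ⟨isClosed_closure.isCompact, ⟨z, subset_closure hzT⟩, hTpre.closure⟩,
      subset_closure hzT, hw, closure_minimal hTF hFcl⟩
  refine (isMeagre_iUnion (f := T) fun n => ?_).mono fun w hw => ?_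
  · refine IsNowhereDense.isMeagre ((hTcl n).isNowhereDense_iff.2 ?_)
    exact subset_empty_iff.1 (hint ▸ interior_mono (hTsub n))
  · obtain ⟨L, hL, hzL, hwL, hLA⟩ := mem_kappa_singleton.1 hw
    obtain ⟨a, haL, hmin⟩ := hL.1.exists_isMinOn ⟨z, hzL⟩ (continuous_infDist_pt A).continuousOn
    have ha : 0 < infDist a A := (hAc.notMem_iff_infDist_pos hAne).1 (hLA haL)
    obtain ⟨n, hn⟩ := exists_nat_one_div_lt ha
    exact mem_iUnion.2 ⟨n, L, hL, hzL, hwL, fun v hv => hn.le.trans (hmin hv)⟩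

lemma exists_near_avoiding_classes [CompactSpace X] (hAc : IsClosed A)
    (hmeagre : ∀ x ∉ A, IsMeagre (kappa A {x})) {T : Set X} (hT : T.Finite) (hTA : T ⊆ Aᶜ)
    (hb : b ∉ A) {δ : ℝ} (hδ : 0 < δ) :
    ∃ b' ∉ A, dist b' b < δ ∧ ∀ t ∈ T, b' ∉ kappa A {t} := by
  have hU : ¬ IsMeagre (ball b δ ∩ Aᶜ) :=
    not_isMeagre_of_isOpen (isOpen_ball.inter hAc.isOpen_compl) ⟨b, mem_ball_self hδ, hb⟩
  have hM : IsMeagre (⋃ t ∈ T, kappa A {t}) :=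
    isMeagre_biUnion hT.countable fun t ht => hmeagre t (hTA ht)
  obtain ⟨b', hb', hb'M⟩ := not_subset.1 fun h => hU (hM.mono h)
  exact ⟨b', hb'.2, hb'.1, fun t ht h => hb'M (mem_iUnion₂.2 ⟨t, ht, h⟩)⟩

/-- When all classes of the complement of `A` are meagre and dense, a finite blocking set off `A`
with at least two points cannot be minimal and stable under perturbing two of its points. -/
lemma KelleyProp.nonblocking_of_perturbations [CompactSpace X] (hkel : KelleyProp X)
    (hA : Nonblocking A) (hAc : IsClosed A) (hmeagre : ∀ x ∉ A, IsMeagre (kappa A {x}))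
    (hC : C.Finite) (hCA : C ⊆ Aᶜ) (hpA : p ∉ A) (hbA : b ∉ A) (hpC : p ∉ C) (hbC : b ∉ C)
    (hbp : b ≠ p)
    (hNB : ∀ p' ∉ A, ∀ b' ∉ A, p' ∉ C → b' ∉ C → b' ≠ p' → ∀ q ∈ insert b' (insert p' C),
      Nonblocking (insert b' (insert p' C) \ {q})) {δ : ℝ} (hδ : 0 < δ)
    (hstable : ∀ p' b', dist p' p < δ → dist b' b < δ →
      ¬ Nonblocking (insert b' (insert p' C))) : False := by
  have hblock : ∀ p' b', dist p' p < δ → dist b' b < δ → ∃ z ∉ insert b' (insert p' C),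
      ¬ Dense (kappa (insert b' (insert p' C)) {z}) := by
    intro p' b' hp' hb'
    simpa only [Nonblocking, not_forall, exists_prop] using hstable p' b' hp' hb'
  have hclosed : ∀ p' b', IsClosed (insert b' (insert p' C)) := fun p' b' =>
    (hC.isClosed.insert p').insert b'
  obtain ⟨z, hzB, hznd⟩ := hblock p b (by simpa) (by simpa)
  have hpR : p ∈ closure (kappa (insert b (insert p C)) {z}) :=
    mem_closure_kappa_of_not_dense
      (hNB p hpA b hbA hpC hbC hbp p (Or.inr (Or.inl rfl))) hzB hznd
  obtain ⟨p', ⟨hp'dist, hp'A⟩, hp'Y⟩ := mem_closure_iff.1 hpR (ball p δ ∩ Aᶜ)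
    (isOpen_ball.inter hAc.isOpen_compl) ⟨mem_ball_self hδ, hpA⟩
  have hp'B : p' ∉ insert b (insert p C) := kappa_subset_compl hp'Y
  simp only [mem_insert_iff, not_or] at hp'B
  obtain ⟨hp'b, hp'p, hp'C⟩ := hp'B
  set T : Set X := insert p' (insert b (insert p C)) with hT
  have hTfin : T.Finite := ((hC.insert p).insert b).insert p'
  have hTA : T ⊆ Aᶜ := by
    rintro a (rfl | rfl | rfl | ha)
    exacts [hp'A, hbA, hpA, hCA ha]
  have hnotT : ∀ b', b' ∉ A → (∀ t ∈ T, b' ∉ kappa A {t}) → b' ∉ T := fun b' hb'A hb' hmem =>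
    hb' b' hmem (mem_kappa_self hb'A)
  have hET : insert p' C ⊆ T := by
    rintro a (rfl | ha)
    exacts [Or.inl rfl, Or.inr (Or.inr (Or.inr ha))]
  obtain ⟨b₁, hb₁A, hb₁, hb₁T⟩ := exists_near_avoiding_classes hAc hmeagre hTfin hTA hbA hδ
  obtain ⟨b₂, hb₂A, hb₂, hb₂T'⟩ := exists_near_avoiding_classes hAc hmeagre
    (hTfin.insert b₁) (insert_subset hb₁A hTA) hbA hδ
  obtain ⟨b₃, hb₃A, hb₃, hb₃T'⟩ := exists_near_avoiding_classes hAc hmeagre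
    ((hTfin.insert b₁).insert b₂) (insert_subset hb₂A (insert_subset hb₁A hTA)) hbA hδ
  have hb₂T : ∀ t ∈ T, b₂ ∉ kappa A {t} := fun t ht => hb₂T' t (Or.inr ht)
  have hb₃T : ∀ t ∈ T, b₃ ∉ kappa A {t} := fun t ht => hb₃T' t (Or.inr (Or.inr ht))
  have h12 : b₂ ∉ kappa A {b₁} := hb₂T' b₁ (Or.inl rfl)
  have h13 : b₃ ∉ kappa A {b₁} := hb₃T' b₁ (Or.inr (Or.inl rfl))
  have h23 : b₃ ∉ kappa A {b₂} := hb₃T' b₂ (Or.inl rfl)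
  obtain ⟨z₁, hz₁, hnd₁⟩ := hblock p' b₁ hp'dist hb₁
  obtain ⟨z₂, hz₂, hnd₂⟩ := hblock p' b₂ hp'dist hb₂
  obtain ⟨z₃, hz₃, hnd₃⟩ := hblock p' b₃ hp'dist hb₃
  have hNB' : ∀ b', b' ∉ A → (∀ t ∈ T, b' ∉ kappa A {t}) →
      ∀ q ∈ insert b' (insert p' C), Nonblocking (insert b' (insert p' C) \ {q}) := by
    intro b' hb'A hb'T
    have := hnotT b' hb'A hb'T
    refine hNB p' hp'A b' hb'A hp'C (fun h => this (hET (Or.inr h))) ?_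
    rintro rfl
    exact this (Or.inl rfl)
  have hsep : ∀ b' b'' z', b'' ∉ A → (∀ t ∈ T, b'' ∉ kappa A {t}) → b'' ∉ kappa A {b'} →
      ¬ Dense (kappa (insert b' (insert p' C)) {z'}) →
      b'' ∉ closure (kappa (insert b' (insert p' C)) {z'}) := by
    intro b' b'' z' hb''A hb''T hb'' hnd hmem
    obtain ⟨q, hq, hq'⟩ :=
      hkel.exists_mem_kappa_of_mem_closure hA (hclosed p' b') hnd hmem hb''A
    rcases hq with rfl | hq
    exacts [hb'' hq', hb''T q (hET hq) hq']
  have hinter : ∀ b' b'' z' z'', b' ∉ A → b'' ∉ A → (∀ t ∈ T, b' ∉ kappa A {t}) →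
      (∀ t ∈ T, b'' ∉ kappa A {t}) → b'' ∉ kappa A {b'} →
      ¬ Dense (kappa (insert b' (insert p' C)) {z'}) →
      ¬ Dense (kappa (insert b'' (insert p' C)) {z''}) →
      closure (kappa (insert b' (insert p' C)) {z'}) ∩
        closure (kappa (insert b'' (insert p' C)) {z''}) ⊆ insert p' C := by
    intro b' b'' z' z'' hb'A hb''A hb'T hb''T hb'' hnd' hnd''
    exact hkel.closure_inter_closure_subset (hC.isClosed.insert p')
      (hNB' b' hb'A hb'T b' (Or.inl rfl))
      (hsep b'' b' z'' hb'A hb'T (fun h => hb'' (mem_kappa_symm h)) hnd'')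
      (hsep b' b'' z' hb''A hb''T hb'' hnd')
  have hmeet : ∀ b' z', b' ∉ A → (∀ t ∈ T, b' ∉ kappa A {t}) → z' ∉ insert b' (insert p' C) →
      ¬ Dense (kappa (insert b' (insert p' C)) {z'}) →
      p ∈ closure (kappa (insert b' (insert p' C)) {z'}) ∨
        b ∈ closure (kappa (insert b' (insert p' C)) {z'}) := by
    intro b' z' hb'A hb'T hz' hnd
    by_contra! hcon
    have hb'p' : b' ≠ p' := by
      rintro rfl
      exact hnotT b' hb'A hb'T (Or.inl rfl)
    have hmem := hkel.mem_closure_kappa_of_notMem hC.isClosed (hNB' b' hb'A hb'T) hz' hnd hb'p'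
      hp'C hcon.1 hcon.2
    have hmem' : b' ∈ closure (kappa (insert b (insert p C)) {z}) :=
      closure_mono (fun v hv => mem_kappa_trans hp'Y hv) hmem
    obtain ⟨q, hq, hq'⟩ :=
      hkel.exists_mem_kappa_of_mem_closure hA (hclosed p b) hznd hmem' hb'A
    exact hb'T q (Or.inr hq) hq'
  have hpE : p ∉ insert p' C := by
    rintro (rfl | h)
    exacts [hp'p rfl, hpC h]
  have hbE : b ∉ insert p' C := by
    rintro (rfl | h)
    exacts [hp'b rfl, hbC h]
  have i12 := hinter b₁ b₂ z₁ z₂ hb₁A hb₂A hb₁T hb₂T h12 hnd₁ hnd₂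
  have i13 := hinter b₁ b₃ z₁ z₃ hb₁A hb₃A hb₁T hb₃T h13 hnd₁ hnd₃
  have i23 := hinter b₂ b₃ z₂ z₃ hb₂A hb₃A hb₂T hb₃T h23 hnd₂ hnd₃
  rcases hmeet b₁ z₁ hb₁A hb₁T hz₁ hnd₁ with h1 | h1 <;>
  rcases hmeet b₂ z₂ hb₂A hb₂T hz₂ hnd₂ with h2 | h2 <;>
  rcases hmeet b₃ z₃ hb₃A hb₃T hz₃ hnd₃ with h3 | h3 <;>
  first
  | exact hpE (i12 ⟨h1, h2⟩)
  | exact hbE (i12 ⟨h1, h2⟩)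
  | exact hpE (i13 ⟨h1, h3⟩)
  | exact hbE (i13 ⟨h1, h3⟩)
  | exact hpE (i23 ⟨h2, h3⟩)
  | exact hbE (i23 ⟨h2, h3⟩)

/-- Blocking is stable under small perturbations when the nonblockers form a closed family. -/
lemma exists_stable_of_not_nonblocking (hcl : IsClosed (NB X)) {B : Set X} (hB : B.Finite)
    (hne : B.Nonempty) (hnb : ¬ Nonblocking B) :
    ∃ δ > 0, ∀ B' : Set X, B'.Finite → B'.Nonempty → hausdorffDist B' B < δ →
      ¬ Nonblocking B' := by
  let N : NonemptyCompacts X := ⟨⟨B, hB.isCompact⟩, hne⟩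
  have hN : N ∈ (NB X)ᶜ := hnb
  obtain ⟨δ, hδ, hsub⟩ := Metric.isOpen_iff.1 hcl.isOpen_compl N hN
  refine ⟨δ, hδ, fun B' hB' hne' hdist hnb' => ?_⟩
  let N' : NonemptyCompacts X := ⟨⟨B', hB'.isCompact⟩, hne'⟩
  exact hsub (show N' ∈ ball N δ from hdist) hnb'

lemma KelleyProp.nonblocking_of_finite [CompactSpace X] (hkel : KelleyProp X)
    (hsing : ∀ x : X, Nonblocking {x}) (hcl : IsClosed (NB X))
    (hA : Nonblocking A) (hAc : IsClosed A) (hmeagre : ∀ x ∉ A, IsMeagre (kappa A {x}))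
    (n : ℕ) (B : Finset X) (hcard : B.card = n + 1) (hBA : (B : Set X) ⊆ Aᶜ) :
    Nonblocking (B : Set X) := by
  classical
  induction n generalizing B with
  | zero =>
    obtain ⟨x, rfl⟩ := Finset.card_eq_one.1 hcard
    simpa using hsing x
  | succ n ih =>
    obtain ⟨b, B₁, hbB₁, rfl, hcard₁⟩ := Finset.card_eq_succ.1 hcard
    obtain ⟨p, C, hpC, rfl, hcardC⟩ := Finset.card_eq_succ.1 hcard₁
    simp only [Finset.coe_insert] at hBA ⊢
    have hbp : b ≠ p := by
      rintro rfl
      exact hbB₁ (Finset.mem_insert_self _ _)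
    have hbC : b ∉ C := fun h => hbB₁ (Finset.mem_insert_of_mem h)
    by_contra hnb
    have hfin : ∀ p' b' : X, (insert b' (insert p' (C : Set X))).Finite := fun p' b' =>
      (C.finite_toSet.insert p').insert b'
    obtain ⟨δ, hδ, hstable⟩ := exists_stable_of_not_nonblocking hcl (hfin p b)
      (insert_nonempty _ _) hnb
    have hCA : (C : Set X) ⊆ Aᶜ := fun a ha => hBA (Or.inr (Or.inr ha))
    refine hkel.nonblocking_of_perturbations hA hAc hmeagre C.finite_toSet hCA
      (hBA (Or.inr (Or.inl rfl))) (hBA (Or.inl rfl)) (by simpa using hpC) (by simpa using hbC) hbp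
      ?_ (half_pos hδ) ?_
    · intro p' hp'A b' hb'A hp'C hb'C hb'p' q hq
      have hcoe : (insert b' (insert p' (C : Set X)) \ {q}) =
          (((insert b' (insert p' C)).erase q : Finset X) : Set X) := by simp
      rw [hcoe]
      refine ih _ ?_ ?_
      · rw [Finset.card_erase_of_mem (by simpa using hq), Finset.card_insert_of_notMem,
          Finset.card_insert_of_notMem (by simpa using hp'C), hcardC]
        · rfl
        · simpa [hb'p'] using hb'C
      · rw [← hcoe]
        rintro a ⟨rfl | rfl | ha, -⟩
        exacts [hb'A, hp'A, hCA ha]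
    · intro p' b' hp' hb'
      refine hstable _ (hfin p' b') (insert_nonempty _ _)
        ((hausdorffDist_le_of_mem_dist (half_pos hδ).le ?_ ?_).trans_lt (half_lt_self hδ))
      · rintro a (rfl | rfl | ha)
        · exact ⟨b, Or.inl rfl, hb'.le⟩
        · exact ⟨p, Or.inr (Or.inl rfl), hp'.le⟩
        · exact ⟨a, Or.inr (Or.inr ha), by simpa using (half_pos hδ).le⟩
      · rintro a (rfl | rfl | ha)
        · exact ⟨b', Or.inl rfl, by rw [dist_comm]; exact hb'.le⟩
        · exact ⟨p', Or.inr (Or.inl rfl), by rw [dist_comm]; exact hp'.le⟩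
        · exact ⟨a, Or.inr (Or.inr ha), by simpa using (half_pos hδ).le⟩

/-- If all finite subsets of a dense set are nonblocking and the nonblockers form a closed family,
then every nonempty compact set is a nonblocker. -/
lemma mem_NB_of_finite (hcl : IsClosed (NB X)) {S : Set X} (hS : Dense S)
    (hfin : ∀ B : Set X, B.Finite → B.Nonempty → B ⊆ S → Nonblocking B)
    (K : NonemptyCompacts X) : K ∈ NB X := by
  refine hcl.closure_subset (Metric.mem_closure_iff.2 fun ε hε => ?_)
  obtain ⟨t, htK, htfin, hcover⟩ := K.isCompact.finite_cover_balls (by positivity : 0 < ε / 4)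
  choose f hfS hf using fun x : X => hS.exists_dist_lt x (by positivity : 0 < ε / 4)
  have htne : t.Nonempty := by
    obtain ⟨k, hk⟩ := K.nonempty
    obtain ⟨x, hx, -⟩ := mem_iUnion₂.1 (hcover hk)
    exact ⟨x, hx⟩
  let N : NonemptyCompacts X := ⟨⟨f '' t, (htfin.image f).isCompact⟩, htne.image f⟩
  refine ⟨N, hfin _ (htfin.image f) (htne.image f) (by rintro _ ⟨x, -, rfl⟩; exact hfS x), ?_⟩
  rw [NonemptyCompacts.dist_eq]
  refine (hausdorffDist_le_of_mem_dist (half_pos hε).le ?_ ?_).trans_lt (half_lt_self hε)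
  · intro k hk
    obtain ⟨x, hx, hkx⟩ := mem_iUnion₂.1 (hcover hk)
    refine ⟨f x, ⟨x, hx, rfl⟩, ?_⟩
    linarith [dist_triangle k x (f x), hf x, mem_ball.1 hkx]
  · rintro _ ⟨x, hx, rfl⟩
    refine ⟨x, htK hx, ?_⟩
    rw [dist_comm]
    linarith [hf x]

end Metric

theorem stmt_12 {X : Type*} [MetricSpace X] [CompactSpace X] [ConnectedSpace X] [Nonempty X]
    (hdec : Decomposable X) (hkel : KelleyProp X)
    (hsing : ∀ A : NonemptyCompacts X, (∃ x : X, (A : Set X) = {x}) → A ∈ NB X)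
    (hcpt : IsCompact (NB X))
    (A : NonemptyCompacts X) (hA : A ∈ NB X) :
    ∀ x ∉ (A : Set X), ∀ y ∉ (A : Set X),
      ∃ L : Set X, IsSubcontinuum L ∧ x ∈ L ∧ y ∈ L ∧ L ⊆ (A : Set X)ᶜ := by
  intro x hx y hy
  by_contra hcon
  have hxy : y ∉ kappa (A : Set X) {x} := fun h => hcon (mem_kappa_singleton.1 h)
  have hne : x ≠ y := by
    rintro rfl
    exact hxy (mem_kappa_self hx)
  have hAc : IsClosed (A : Set X) := A.isCompact.isClosed
  have hA' : Nonblocking (A : Set X) := hA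
  have hcl : IsClosed (NB X) := hcpt.isClosed
  have hsing' : ∀ a : X, Nonblocking ({a} : Set X) := fun a =>
    hsing ⟨⟨{a}, isCompact_singleton⟩, singleton_nonempty a⟩ ⟨a, rfl⟩
  have hmeagre : ∀ z ∉ (A : Set X), IsMeagre (kappa (A : Set X) {z}) := fun _ _ =>
    hA'.kappa_isMeagre hAc A.nonempty hx hy hxy
  have hall := mem_NB_of_finite hcl ((hA' x hx).mono kappa_subset_compl) fun B hB hBne hBA => by
    obtain ⟨n, hn⟩ := Nat.exists_eq_succ_of_ne_zero
      (Finset.card_pos.2 (hB.toFinset_nonempty.2 hBne)).ne'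
    simpa using hkel.nonblocking_of_finite hsing' hcl hA' hAc hmeagre n hB.toFinset hn
      (by simpa using hBA)
  have hpos : 0 < dist x y / 2 := half_pos (dist_pos.2 hne)
  have hyball : y ∉ closedBall x (dist x y / 2) := by
    rw [mem_closedBall, dist_comm, not_le]
    linarith
  have hball : Nonblocking (closedBall x (dist x y / 2)) :=
    hall ⟨⟨closedBall x (dist x y / 2), isCompact_closedBall x _⟩, x, mem_closedBall_self hpos.le⟩
  obtain ⟨v, hv, hvk⟩ := (hball y hyball).inter_open_nonempty _ isOpen_ball ⟨x, mem_ball_self hpos⟩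
  exact kappa_subset_compl hvk (ball_subset_closedBall hv)
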